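/- There exists a constant C depending only on m and δ such that for every measurable Z : ℝ² → ℂ: ‖ 1_{|k| ≥ μ}·⟨k⟩^m·min(|k|^{1/4},1)·|k|^{2/3}·|η − kt|·p^{−3/4}·Z ‖_{L²_k L¹_η} ≤ C·μ^{−1/3}·( D_{τα}^{1/2} + μ^{−δ}·D_α^{δ}·D_{τα}^{1/2−δ} ), where 1_{|k| ≥ μ} denotes the indicator function of the set {(k,η) : |k| ≥ μ}. -/

import Mathlib

open MeasureTheory Real
open scoped ENNReal NNReal

noncomputable section

/-- The Japanese bracket `⟨k⟩ = (1+k²)^{1/2}`. -/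
def jap (k : ℝ) : ℝ := Real.sqrt (1 + k ^ 2)

/-- The moving-frame symbol `p(k,η) = k² + (η − kt)²`. -/
def pw (t k η : ℝ) : ℝ := k ^ 2 + (η - k * t) ^ 2

/-- The weight `A(k)`. -/
def Aw (μ k : ℝ) : ℝ :=
  if |k| < μ then 1 else μ ^ ((1 : ℝ) / 3) * |k| ^ (-(1 : ℝ) / 3)

/-- The weight `B(k)`. -/
def Bw (μ k : ℝ) : ℝ :=
  if |k| < μ then μ ^ (-(1 : ℝ) / 2) else μ ^ ((1 : ℝ) / 6) * |k| ^ (-(2 : ℝ) / 3)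

/-- Weighted `L¹(ℝ²)` norm `‖w·Z‖_{L¹}` (iterated, value in `[0,∞]`). -/
def L1n (w : ℝ → ℝ → ℝ) (Z : ℝ × ℝ → ℂ) : ℝ≥0∞ :=
  ∫⁻ k : ℝ, ∫⁻ η : ℝ, ENNReal.ofReal (w k η) * (‖Z (k, η)‖₊ : ℝ≥0∞)

/-- Weighted `L²(ℝ²)` norm `‖w·Z‖_{L²}` (value in `[0,∞]`). -/
def L2n (w : ℝ → ℝ → ℝ) (Z : ℝ × ℝ → ℂ) : ℝ≥0∞ :=
  (∫⁻ k : ℝ, ∫⁻ η : ℝ,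
      (ENNReal.ofReal (w k η) * (‖Z (k, η)‖₊ : ℝ≥0∞)) ^ 2) ^ ((1 : ℝ) / 2)

/-- Weighted mixed norm `‖w·Z‖_{L²_k L¹_η}` (value in `[0,∞]`). -/
def L2L1n (w : ℝ → ℝ → ℝ) (Z : ℝ × ℝ → ℂ) : ℝ≥0∞ :=
  (∫⁻ k : ℝ,
      (∫⁻ η : ℝ, ENNReal.ofReal (w k η) * (‖Z (k, η)‖₊ : ℝ≥0∞)) ^ 2) ^ ((1 : ℝ) / 2)

/-- The energy `E = ‖⟨k⟩^m Z‖_{L²} + ‖⟨k⟩^m A(k)(η−kt) Z‖_{L²}`. -/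
def En (t μ m : ℝ) (Z : ℝ × ℝ → ℂ) : ℝ≥0∞ :=
  L2n (fun k _ => jap k ^ m) Z + L2n (fun k η => jap k ^ m * Aw μ k * |η - k * t|) Z

/-- The dissipation `D_γ = μ·∬ ⟨k⟩^{2m} p |Z|²`. -/
def Dg (t μ m : ℝ) (Z : ℝ × ℝ → ℂ) : ℝ≥0∞ :=
  ENNReal.ofReal μ * ∫⁻ k : ℝ, ∫⁻ η : ℝ,
    ENNReal.ofReal (jap k ^ (2 * m) * pw t k η) * (‖Z (k, η)‖₊ : ℝ≥0∞) ^ 2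

/-- The dissipation `D_τ = ∬ ⟨k⟩^{2m} k² p⁻¹ |Z|²`. -/
def Dtau (t m : ℝ) (Z : ℝ × ℝ → ℂ) : ℝ≥0∞ :=
  ∫⁻ k : ℝ, ∫⁻ η : ℝ,
    ENNReal.ofReal (jap k ^ (2 * m) * k ^ 2 / pw t k η) * (‖Z (k, η)‖₊ : ℝ≥0∞) ^ 2

/-- The dissipation `D_α = μ·∬ ⟨k⟩^{2m} A(k)² (η−kt)² p |Z|²`. -/
def Dal (t μ m : ℝ) (Z : ℝ × ℝ → ℂ) : ℝ≥0∞ :=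
  ENNReal.ofReal μ * ∫⁻ k : ℝ, ∫⁻ η : ℝ,
    ENNReal.ofReal (jap k ^ (2 * m) * Aw μ k ^ 2 * (η - k * t) ^ 2 * pw t k η)
      * (‖Z (k, η)‖₊ : ℝ≥0∞) ^ 2

/-- The dissipation `D_{τα} = ∬ ⟨k⟩^{2m} A(k)² k² (η−kt)² p⁻¹ |Z|²`. -/
def Dta (t μ m : ℝ) (Z : ℝ × ℝ → ℂ) : ℝ≥0∞ :=
  ∫⁻ k : ℝ, ∫⁻ η : ℝ,
    ENNReal.ofReal (jap k ^ (2 * m) * Aw μ k ^ 2 * k ^ 2 * (η - k * t) ^ 2 / pw t k η)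
      * (‖Z (k, η)‖₊ : ℝ≥0∞) ^ 2

/-- The dissipation `D_β = ∬ ⟨k⟩^{2m} B(k)² k² |Z|²`. -/
def Db (t μ m : ℝ) (Z : ℝ × ℝ → ℂ) : ℝ≥0∞ :=
  ∫⁻ k : ℝ, ∫⁻ η : ℝ,
    ENNReal.ofReal (jap k ^ (2 * m) * Bw μ k ^ 2 * k ^ 2) * (‖Z (k, η)‖₊ : ℝ≥0∞) ^ 2

/-- Scaling of the Japanese bracket integral. -/
theorem aux_int (δ : ℝ) (hδ0 : 0 < δ) (t k : ℝ) (hk : k ≠ 0) :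
    ∫⁻ η : ℝ, ENNReal.ofReal (pw t k η ^ (-(1 + 8 * δ) / 2)) =
      ENNReal.ofReal (|k| ^ (-(8 * δ)) * ∫ x : ℝ, (1 + ‖x‖ ^ 2) ^ (-(1 + 8 * δ) / 2)) := by
  have hκ : 0 < |k| := abs_pos.mpr hk
  have hint : Integrable (fun x : ℝ => (1 + ‖x‖ ^ 2) ^ (-(1 + 8 * δ) / 2)) := by
    apply integrable_rpow_neg_one_add_norm_sq
    simp; linarith
  have e : ∀ η, pw t k η ^ (-(1 + 8 * δ) / 2) =
      |k| ^ (-(1 + 8 * δ)) * (1 + ‖(η - k * t) / |k|‖ ^ 2) ^ (-(1 + 8 * δ) / 2) := by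
    intro η
    have h1 : pw t k η = (|k| ^ (2 : ℝ)) * (1 + ‖(η - k * t) / |k|‖ ^ 2) := by
      rw [Real.norm_eq_abs, sq_abs, Real.rpow_two, div_pow, pw]
      have := hκ.ne'
      field_simp
      simp
    rw [h1, Real.mul_rpow (by positivity) (by positivity), ← Real.rpow_mul hκ.le]
    congr 2
    ring
  have hint2 : Integrable (fun η : ℝ =>
      (1 + ‖(η - k * t) / |k|‖ ^ 2) ^ (-(1 + 8 * δ) / 2)) :=
    (hint.comp_div hκ.ne').comp_sub_right (k * t)
  simp_rw [e]
  rw [← ofReal_integral_eq_lintegral_ofReal (hint2.const_mul _)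
    (Filter.Eventually.of_forall fun η => by positivity)]
  congr 1
  rw [integral_const_mul,
    integral_sub_right_eq_self (fun η : ℝ => (1 + ‖η / |k|‖ ^ 2) ^ (-(1 + 8 * δ) / 2)) (k * t),
    Measure.integral_comp_div (fun x : ℝ => (1 + ‖x‖ ^ 2) ^ (-(1 + 8 * δ) / 2)) |k|,
    smul_eq_mul, ← mul_assoc, abs_abs]
  congr 1
  rw [← Real.rpow_add_one hκ.ne']
  congr 1
  ring

/-- Cauchy–Schwarz for lower integrals. -/
theorem aux_cs (f g : ℝ → ℝ≥0∞) (hf : Measurable f) (hg : Measurable g) :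
    (∫⁻ x, f x * g x) ^ 2 ≤ (∫⁻ x, f x ^ 2) * ∫⁻ x, g x ^ 2 := by
  have h := ENNReal.lintegral_mul_le_Lp_mul_Lq volume Real.HolderConjugate.two_two
    hf.aemeasurable hg.aemeasurable
  simp only [Pi.mul_apply, ENNReal.rpow_two] at h
  calc _ ≤ _ := pow_le_pow_left' h 2
    _ = _ := by
      rw [← ENNReal.mul_rpow_of_nonneg _ _ (by norm_num), ← ENNReal.rpow_two, ← ENNReal.rpow_mul]
      norm_num

theorem aux_min (δ : ℝ) (hδ0 : 0 < δ) (hδ1 : δ < 1 / 12) (κ : ℝ) (hκ : 0 < κ) :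
    min (κ ^ ((1 : ℝ) / 4)) 1 ^ 2 * κ ^ (4 * δ) * κ ^ (-(8 * δ)) ≤ 1 := by
  rw [mul_assoc, ← Real.rpow_add hκ]
  have h0 : 0 ≤ min (κ ^ ((1 : ℝ) / 4)) 1 := by positivity
  rcases le_total κ 1 with h | h
  · calc _ ≤ (κ ^ ((1 : ℝ) / 4)) ^ 2 * κ ^ (4 * δ + -(8 * δ)) := by
          gcongr; exact min_le_left _ _
      _ = κ ^ (1 / 2 - 4 * δ) := by
          rw [← Real.rpow_natCast, ← Real.rpow_mul hκ.le, ← Real.rpow_add hκ]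
          congr 1; push_cast; ring
      _ ≤ 1 := Real.rpow_le_one hκ.le h (by linarith)
  · calc _ ≤ (1 : ℝ) ^ 2 * κ ^ (4 * δ + -(8 * δ)) := by
          gcongr; exact min_le_right _ _
      _ ≤ 1 := by
          rw [one_pow, one_mul]
          exact Real.rpow_le_one_of_one_le_of_nonpos h (by linarith)

/-- First factor in the Cauchy–Schwarz step. -/
def phi (δ t μ k η : ℝ) : ℝ :=
  μ ^ (-(1 / 3 : ℝ)) * min (|k| ^ ((1 : ℝ) / 4)) 1 * |k| ^ (2 * δ)
    * pw t k η ^ (-(1 + 8 * δ) / 4)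

/-- Second factor in the Cauchy–Schwarz step. -/
def psi (δ t μ m k η : ℝ) : ℝ :=
  jap k ^ m * Aw μ k * |η - k * t| * |k| ^ (1 - 2 * δ) * pw t k η ^ (2 * δ - 1 / 2)

theorem jap_pos (k : ℝ) : 0 < jap k := Real.sqrt_pos.mpr (by positivity)

theorem pw_pos (t k η : ℝ) (hk : k ≠ 0) : 0 < pw t k η := by
  unfold pw; positivity

theorem Aw_pos (μ k : ℝ) (hμ : 0 < μ) (hk : k ≠ 0) : 0 < Aw μ k := by
  unfold Aw
  have := abs_pos.mpr hk
  split_ifs <;> positivity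

theorem w_eq (δ t μ m k η : ℝ) (hμ : 0 < μ) (hk : k ≠ 0) (hkμ : μ ≤ |k|) :
    (if μ ≤ |k| then 1 else 0) * jap k ^ m * min (|k| ^ ((1 : ℝ) / 4)) 1
      * |k| ^ ((2 : ℝ) / 3) * |η - k * t| * pw t k η ^ (-(3 : ℝ) / 4)
      = phi δ t μ k η * psi δ t μ m k η := by
  have hκ : 0 < |k| := abs_pos.mpr hk
  have hp := pw_pos t k η hk
  unfold phi psi Aw
  rw [if_pos hkμ, if_neg (not_lt.mpr hkμ)]
  have e1 : pw t k η ^ (-(3 : ℝ) / 4)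
      = pw t k η ^ (-(1 + 8 * δ) / 4) * pw t k η ^ (2 * δ - 1 / 2) := by
    rw [← Real.rpow_add hp]; congr 1; ring
  have e2 : |k| ^ ((2 : ℝ) / 3)
      = |k| ^ (2 * δ) * |k| ^ (-(1 : ℝ) / 3) * |k| ^ (1 - 2 * δ) := by
    rw [← Real.rpow_add hκ, ← Real.rpow_add hκ]; congr 1; ring
  have e3 : μ ^ (-(1 / 3 : ℝ)) * μ ^ ((1 : ℝ) / 3) = 1 := by
    rw [← Real.rpow_add hμ]; simp
  rw [e1, e2]
  linear_combination (-(jap k ^ m * min (|k| ^ ((1 : ℝ) / 4)) 1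
    * (|k| ^ (2 * δ) * |k| ^ (-(1 : ℝ) / 3) * |k| ^ (1 - 2 * δ)) * |η - k * t|
    * (pw t k η ^ (-(1 + 8 * δ) / 4) * pw t k η ^ (2 * δ - 1 / 2)))) * e3

theorem psi_sq (δ t μ m k η : ℝ) (hμ : 0 < μ) (hk : k ≠ 0) :
    psi δ t μ m k η ^ 2 =
      (jap k ^ (2 * m) * Aw μ k ^ 2 * k ^ 2 * (η - k * t) ^ 2 / pw t k η) ^ (1 - 2 * δ) *
      (jap k ^ (2 * m) * Aw μ k ^ 2 * (η - k * t) ^ 2 * pw t k η) ^ (2 * δ) := by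
  have hκ : 0 < |k| := abs_pos.mpr hk
  have hp := pw_pos t k η hk
  have hA := Aw_pos μ k hμ hk
  have hj := jap_pos k
  set X := jap k ^ (2 * m) * Aw μ k ^ 2 * (η - k * t) ^ 2 with hX
  have hX0 : 0 ≤ X := by positivity
  have e1 : jap k ^ (2 * m) * Aw μ k ^ 2 * k ^ 2 * (η - k * t) ^ 2 / pw t k η
      = X * (|k| ^ (2 : ℝ) * pw t k η ^ (-1 : ℝ)) := by
    rw [Real.rpow_two, sq_abs, Real.rpow_neg_one, hX]; ring
  have e2 : psi δ t μ m k η ^ 2 = X * (|k| ^ (2 - 4 * δ) * pw t k η ^ (4 * δ - 1)) := by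
    unfold psi
    simp only [mul_pow, sq_abs]
    have a1 : (jap k ^ m) ^ 2 = jap k ^ (2 * m) := by
      rw [← Real.rpow_natCast, ← Real.rpow_mul hj.le]; congr 1; push_cast; ring
    have a2 : (|k| ^ (1 - 2 * δ)) ^ 2 = |k| ^ (2 - 4 * δ) := by
      rw [← Real.rpow_natCast, ← Real.rpow_mul hκ.le]; congr 1; push_cast; ring
    have a3 : (pw t k η ^ (2 * δ - 1 / 2)) ^ 2 = pw t k η ^ (4 * δ - 1) := by
      rw [← Real.rpow_natCast, ← Real.rpow_mul hp.le]; congr 1; push_cast; ring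
    rw [a1, a2, a3, hX]; ring
  have e3 : X = X ^ (1 - 2 * δ) * X ^ (2 * δ) := by
    rw [← Real.rpow_add' hX0 (by norm_num)]; simp
  have e4 : pw t k η ^ (4 * δ - 1)
      = (pw t k η ^ (-1 : ℝ)) ^ (1 - 2 * δ) * pw t k η ^ (2 * δ) := by
    rw [← Real.rpow_mul hp.le, ← Real.rpow_add hp]; congr 1; ring
  have e5 : |k| ^ (2 - 4 * δ) = (|k| ^ (2 : ℝ)) ^ (1 - 2 * δ) := by
    rw [← Real.rpow_mul hκ.le]; congr 1; ring
  clear_value X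
  rw [e1, e2, Real.mul_rpow hX0 (by positivity), Real.mul_rpow (by positivity) (by positivity),
    Real.mul_rpow hX0 hp.le, e4, e5]
  conv_lhs => rw [e3]
  ring

theorem psi_enn (δ t μ m k η : ℝ) (hμ : 0 < μ) (hδ0 : 0 < δ) (hδ1 : δ < 1 / 12) (hk : k ≠ 0)
    (z : ℝ≥0∞) :
    (ENNReal.ofReal (psi δ t μ m k η) * z) ^ 2 =
      (ENNReal.ofReal (jap k ^ (2 * m) * Aw μ k ^ 2 * k ^ 2 * (η - k * t) ^ 2 / pw t k η)
        * z ^ 2) ^ (1 - 2 * δ) *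
      (ENNReal.ofReal (jap k ^ (2 * m) * Aw μ k ^ 2 * (η - k * t) ^ 2 * pw t k η)
        * z ^ 2) ^ (2 * δ) := by
  have hp := pw_pos t k η hk
  have hA := Aw_pos μ k hμ hk
  have hj := jap_pos k
  have h1 : (0 : ℝ) ≤ 1 - 2 * δ := by linarith
  have h2 : (0 : ℝ) ≤ 2 * δ := by linarith
  rw [ENNReal.mul_rpow_of_nonneg _ _ h1, ENNReal.mul_rpow_of_nonneg _ _ h2, mul_pow,
    ← ENNReal.ofReal_pow (by unfold psi; positivity), psi_sq δ t μ m k η hμ hk,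
    ENNReal.ofReal_mul (by positivity), ENNReal.ofReal_rpow_of_nonneg (by positivity) h1,
    ENNReal.ofReal_rpow_of_nonneg (by positivity) h2]
  have e : z ^ 2 = (z ^ 2) ^ (1 - 2 * δ) * (z ^ 2) ^ (2 * δ) := by
    rw [← ENNReal.rpow_add_of_nonneg _ _ h1 h2]; simp
  conv_lhs => rw [e]
  ring

theorem phi_int (δ t μ k : ℝ) (hμ : 0 < μ) (hδ0 : 0 < δ) (hδ1 : δ < 1 / 12) (hk : k ≠ 0) :
    ∫⁻ η : ℝ, ENNReal.ofReal (phi δ t μ k η) ^ 2 ≤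
      ENNReal.ofReal (μ ^ (-(1 / 3 : ℝ))) ^ 2 *
        ENNReal.ofReal (∫ x : ℝ, (1 + ‖x‖ ^ 2) ^ (-(1 + 8 * δ) / 2)) := by
  have hκ : 0 < |k| := abs_pos.mpr hk
  set I := ∫ x : ℝ, (1 + ‖x‖ ^ 2) ^ (-(1 + 8 * δ) / 2) with hI
  have hI0 : 0 ≤ I := integral_nonneg fun x => by positivity
  have hM := aux_min δ hδ0 hδ1 |k| hκ
  have hmin : 0 ≤ min (|k| ^ ((1 : ℝ) / 4)) 1 := by positivity
  have e : ∀ η, ENNReal.ofReal (phi δ t μ k η) ^ 2 =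
      ENNReal.ofReal ((μ ^ (-(1 / 3 : ℝ))) ^ 2 * (min (|k| ^ ((1 : ℝ) / 4)) 1 ^ 2 * |k| ^ (4 * δ)))
        * ENNReal.ofReal (pw t k η ^ (-(1 + 8 * δ) / 2)) := by
    intro η
    have hp := pw_pos t k η hk
    rw [← ENNReal.ofReal_pow (by unfold phi; positivity), ← ENNReal.ofReal_mul (by positivity)]
    congr 1
    unfold phi
    have a2 : (|k| ^ (2 * δ)) ^ 2 = |k| ^ (4 * δ) := by
      rw [← Real.rpow_natCast, ← Real.rpow_mul hκ.le]; congr 1; push_cast; ring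
    have a3 : (pw t k η ^ (-(1 + 8 * δ) / 4)) ^ 2 = pw t k η ^ (-(1 + 8 * δ) / 2) := by
      rw [← Real.rpow_natCast, ← Real.rpow_mul hp.le]; congr 1; push_cast; ring
    simp only [mul_pow]
    rw [a2, a3]; ring
  simp_rw [e]
  rw [lintegral_const_mul' _ _ ENNReal.ofReal_ne_top, aux_int δ hδ0 t k hk,
    ← ENNReal.ofReal_mul (by positivity), ← ENNReal.ofReal_pow (by positivity),
    ← ENNReal.ofReal_mul (by positivity)]
  apply ENNReal.ofReal_le_ofReal
  rw [← hI]
  calc _ = ((μ ^ (-(1 / 3 : ℝ))) ^ 2 * I) *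
        (min (|k| ^ ((1 : ℝ) / 4)) 1 ^ 2 * |k| ^ (4 * δ) * |k| ^ (-(8 * δ))) := by ring
    _ ≤ ((μ ^ (-(1 / 3 : ℝ))) ^ 2 * I) * 1 := by gcongr
    _ = _ := by ring

theorem meas_jap : Measurable jap := by unfold jap; fun_prop

theorem meas_Aw (μ : ℝ) : Measurable (Aw μ) := by
  unfold Aw
  exact Measurable.ite (measurableSet_lt (by fun_prop) (by fun_prop)) (by fun_prop) (by fun_prop)

/-- high-frequency `D_{τα}` interpolation lemma: there is
`C = C(m,δ)` such that for all `t`, `μ ∈ (0,1)` and measurable `Z`,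
`‖1_{|k|≥μ} ⟨k⟩^m min(|k|^{1/4},1) |k|^{2/3} |η−kt| p^{−3/4} Z‖_{L²_kL¹_η}
  ≤ C μ^{−1/3}(D_{τα}^{1/2} + μ^{−δ}D_α^δ D_{τα}^{1/2−δ})`. -/
theorem stmt17 (m δ : ℝ) (hm : 0 < m) (hδ : δ ∈ Set.Ioo (0 : ℝ) (1 / 12)) :
    ∃ C : ℝ, 0 < C ∧
      ∀ (t μ : ℝ), μ ∈ Set.Ioo (0 : ℝ) 1 →
        ∀ Z : ℝ × ℝ → ℂ, Measurable Z →
          L2L1n (fun k η =>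
              (if μ ≤ |k| then 1 else 0) * jap k ^ m * min (|k| ^ ((1 : ℝ) / 4)) 1
                * |k| ^ ((2 : ℝ) / 3) * |η - k * t| * pw t k η ^ (-(3 : ℝ) / 4)) Z
            ≤ ENNReal.ofReal C *
                (ENNReal.ofReal (μ ^ (-(1 / 3 : ℝ))) *
                  (Dta t μ m Z ^ ((1 : ℝ) / 2)
                    + ENNReal.ofReal (μ ^ (-δ)) * Dal t μ m Z ^ δ
                        * Dta t μ m Z ^ ((1 : ℝ) / 2 - δ))) := by
  obtain ⟨hδ0, hδ1⟩ := hδ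
  set I := ∫ x : ℝ, (1 + ‖x‖ ^ 2) ^ (-(1 + 8 * δ) / 2) with hI
  have hI0 : 0 ≤ I := integral_nonneg fun x => by positivity
  refine ⟨I ^ ((1 : ℝ) / 2) + 1, by positivity, ?_⟩
  rintro t μ ⟨hμ, hμ1⟩ Z hZ
  have mj := meas_jap
  have mA := meas_Aw μ
  set F : ℝ × ℝ → ℝ≥0∞ := fun q =>
    ENNReal.ofReal (jap q.1 ^ (2 * m) * Aw μ q.1 ^ 2 * q.1 ^ 2 * (q.2 - q.1 * t) ^ 2
      / pw t q.1 q.2) * (‖Z q‖₊ : ℝ≥0∞) ^ 2 with hF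
  set G : ℝ × ℝ → ℝ≥0∞ := fun q =>
    ENNReal.ofReal (jap q.1 ^ (2 * m) * Aw μ q.1 ^ 2 * (q.2 - q.1 * t) ^ 2
      * pw t q.1 q.2) * (‖Z q‖₊ : ℝ≥0∞) ^ 2 with hG
  have mF : Measurable F := by
    rw [hF]; unfold pw; fun_prop
  have mG : Measurable G := by
    rw [hG]; unfold pw; fun_prop
  have hDta : Dta t μ m Z = ∫⁻ q, F q := by
    rw [Measure.volume_eq_prod, lintegral_prod _ mF.aemeasurable]; rfl
  have hDal : Dal t μ m Z = ENNReal.ofReal μ * ∫⁻ q, G q := by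
    rw [Measure.volume_eq_prod, lintegral_prod _ mG.aemeasurable]; rfl
  set K : ℝ≥0∞ := ENNReal.ofReal (μ ^ (-(1 / 3 : ℝ))) ^ 2 * ENNReal.ofReal I with hK
  have hKtop : K ≠ ⊤ := ENNReal.mul_ne_top (by simp) (by simp)
  have hpt : ∀ k : ℝ, (∫⁻ η : ℝ, ENNReal.ofReal (
      (if μ ≤ |k| then 1 else 0) * jap k ^ m * min (|k| ^ ((1 : ℝ) / 4)) 1
        * |k| ^ ((2 : ℝ) / 3) * |η - k * t| * pw t k η ^ (-(3 : ℝ) / 4))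
        * (‖Z (k, η)‖₊ : ℝ≥0∞)) ^ 2
      ≤ K * ∫⁻ η : ℝ, F (k, η) ^ (1 - 2 * δ) * G (k, η) ^ (2 * δ) := by
    intro k
    by_cases hkμ : μ ≤ |k|
    · have hk : k ≠ 0 := abs_pos.mp (hμ.trans_le hkμ)
      have hphi : ∀ η, 0 ≤ phi δ t μ k η := fun η => by
        have := pw_pos t k η hk
        unfold phi; positivity
      simp_rw [w_eq δ t μ m k _ hμ hk hkμ, ENNReal.ofReal_mul (hphi _), mul_assoc]
      refine (aux_cs _ _ ?_ ?_).trans ?_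
      · unfold phi pw; fun_prop
      · unfold psi pw; fun_prop
      · simp_rw [psi_enn δ t μ m k _ hμ hδ0 hδ1 hk]
        exact mul_le_mul_left (phi_int δ t μ k hμ hδ0 hδ1 hk) _
    · simp [hkμ]
  clear_value F G I K
  have hmain : ∫⁻ k : ℝ, ∫⁻ η : ℝ, F (k, η) ^ (1 - 2 * δ) * G (k, η) ^ (2 * δ)
      ≤ (∫⁻ q, F q) ^ (1 - 2 * δ) * (∫⁻ q, G q) ^ (2 * δ) := by
    rw [← lintegral_prod (fun q : ℝ × ℝ => F q ^ (1 - 2 * δ) * G q ^ (2 * δ))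
      ((mF.pow_const _).mul (mG.pow_const _)).aemeasurable, ← Measure.volume_eq_prod]
    exact ENNReal.lintegral_mul_norm_pow_le mF.aemeasurable mG.aemeasurable
      (by linarith) (by linarith) (by ring)
  have hGd : ENNReal.ofReal (μ ^ (-δ)) * Dal t μ m Z ^ δ = (∫⁻ q, G q) ^ δ := by
    rw [hDal, ENNReal.mul_rpow_of_nonneg _ _ hδ0.le, ← mul_assoc,
      ENNReal.ofReal_rpow_of_nonneg hμ.le hδ0.le, ← ENNReal.ofReal_mul (by positivity),
      ← Real.rpow_add hμ]
    simp
  rw [hGd, hDta]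
  unfold L2L1n
  calc _ ≤ (∫⁻ k : ℝ, K * ∫⁻ η : ℝ, F (k, η) ^ (1 - 2 * δ) * G (k, η) ^ (2 * δ))
          ^ ((1 : ℝ) / 2) := by
        gcongr with k
        exact hpt k
    _ ≤ (K * ((∫⁻ q, F q) ^ (1 - 2 * δ) * (∫⁻ q, G q) ^ (2 * δ))) ^ ((1 : ℝ) / 2) := by
        rw [lintegral_const_mul' _ _ hKtop]
        gcongr
    _ = ENNReal.ofReal (I ^ ((1 : ℝ) / 2)) * (ENNReal.ofReal (μ ^ (-(1 / 3 : ℝ))) *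
          ((∫⁻ q, G q) ^ δ * (∫⁻ q, F q) ^ ((1 : ℝ) / 2 - δ))) := by
        have h2 : (0 : ℝ) ≤ 1 / 2 := by norm_num
        rw [hK, ENNReal.mul_rpow_of_nonneg _ _ h2, ENNReal.mul_rpow_of_nonneg _ _ h2,
          ENNReal.mul_rpow_of_nonneg _ _ h2, ← ENNReal.rpow_mul, ← ENNReal.rpow_mul,
          ← ENNReal.rpow_two, ← ENNReal.rpow_mul, ENNReal.ofReal_rpow_of_nonneg hI0 h2,
          show (1 - 2 * δ) * (1 / 2) = 1 / 2 - δ by ring, show 2 * δ * (1 / 2) = δ by ring,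
          show (2 : ℝ) * (1 / 2) = 1 by norm_num, ENNReal.rpow_one]
        ring
    _ ≤ _ := by
        refine mul_le_mul' (ENNReal.ofReal_le_ofReal (le_add_of_nonneg_right zero_le_one)) ?_
        exact mul_le_mul' le_rfl le_add_self
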